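/- Let Φ be any 4×3 real matrix with orthonormal columns (Φᵀ Φ = I₃). Then there exists a 3-element subset S of {1,2,3,4} and a nonzero u ∈ ℤ³ such that ‖Φ_S u‖² ≤ 3/4, where Φ_S is the 3×3 matrix of rows of Φ indexed by S. -/

import Mathlib

open Matrix

/-- The `k × k` submatrix of `Φ` formed by the rows indexed by the `k`-element subset `S`. -/
def rowsSub {n k : ℕ} (Φ : Matrix (Fin n) (Fin k) ℝ)
    (S : {s : Finset (Fin n) // s.card = k}) : Matrix (Fin k) (Fin k) ℝ :=
  fun i j => Φ ((S.1.orderIsoOfFin S.2 i : Fin n)) j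

/-- Squared Euclidean norm of a vector in `ℝ^k`. -/
def sqnorm {k : ℕ} (x : Fin k → ℝ) : ℝ := ∑ i, x i ^ 2


/-! Averaged over all `k`-element sets `S` of rows, `‖Φ_S x‖²` equals `(k / n) ‖Φ x‖²`, since each
row lies in the same proportion `k / n` of these sets. Hence for every `x` some `S` does at least as
well as the average. When `Φ` has orthonormal columns, `‖Φ x‖² = ‖x‖²`, which is `1` at the first
standard basis vector. -/

section Averaging

open Finset

variable {ι M : Type*}

lemma sum_powersetCard_succ_sum [AddCommMonoid M] (t : Finset ι) (k : ℕ) (f : ι → M) :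
    ∑ s ∈ t.powersetCard (k + 1), ∑ i ∈ s, f i = (#t - 1).choose k • ∑ i ∈ t, f i := by
  classical
  have card_sets_through {i : ι} (hi : i ∈ t) :
      #{s ∈ t.powersetCard (k + 1) | i ∈ s} = (#t - 1).choose k := by
    simpa using card_filter_powersetCard_subset {i} t (k + 1) (by simpa using hi) (by simp)
  calc ∑ s ∈ t.powersetCard (k + 1), ∑ i ∈ s, f i
    _ = ∑ i ∈ t, ∑ s ∈ t.powersetCard (k + 1) with i ∈ s, f i :=
      sum_comm' fun s i => by
        simp only [mem_filter, mem_powersetCard]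
        exact ⟨fun ⟨hs, hi⟩ => ⟨⟨hs, hi⟩, hs.1 hi⟩, fun ⟨hs, _⟩ => hs⟩
    _ = ∑ i ∈ t, (#t - 1).choose k • f i :=
      sum_congr rfl fun i hi => by rw [sum_const, card_sets_through hi]
    _ = (#t - 1).choose k • ∑ i ∈ t, f i := (smul_sum ..).symm

lemma card_nsmul_sum_powersetCard_sum [AddCommMonoid M] (t : Finset ι) (k : ℕ) (f : ι → M) :
    #t • ∑ s ∈ t.powersetCard k, ∑ i ∈ s, f i = (#t).choose k • k • ∑ i ∈ t, f i := by
  obtain rfl | ht := t.eq_empty_or_nonempty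
  · simp
  cases k with
  | zero => simp
  | succ k =>
    obtain ⟨n, hn⟩ : ∃ n, #t = n + 1 := Nat.exists_eq_add_one.mpr ht.card_pos
    rw [sum_powersetCard_succ_sum, hn, Nat.add_sub_cancel, ← mul_nsmul', ← mul_nsmul',
      Nat.add_one_mul_choose_eq]

lemma exists_mem_powersetCard_card_nsmul_sum_le [AddCommMonoid M] [LinearOrder M]
    [IsOrderedCancelAddMonoid M] {t : Finset ι} {k : ℕ} (hk : k ≤ #t) (f : ι → M) :
    ∃ s ∈ t.powersetCard k, #t • ∑ i ∈ s, f i ≤ k • ∑ i ∈ t, f i := by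
  refine exists_le_of_sum_le (powersetCard_nonempty.mpr hk) ?_
  rw [← smul_sum, card_nsmul_sum_powersetCard_sum, sum_const, card_powersetCard]

end Averaging

section ChildLattice

variable {n k : ℕ}

lemma sqnorm_rowsSub_mulVec (Φ : Matrix (Fin n) (Fin k) ℝ)
    (S : {s : Finset (Fin n) // s.card = k}) (x : Fin k → ℝ) :
    sqnorm (rowsSub Φ S *ᵥ x) = ∑ i ∈ S.1, (Φ *ᵥ x) i ^ 2 :=
  calc sqnorm (rowsSub Φ S *ᵥ x)
    _ = ∑ i : S.1, (Φ *ᵥ x) i ^ 2 :=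
      (S.1.orderIsoOfFin S.2).toEquiv.sum_comp fun i : S.1 => (Φ *ᵥ x) i ^ 2
    _ = ∑ i ∈ S.1, (Φ *ᵥ x) i ^ 2 := S.1.sum_coe_sort fun i => (Φ *ᵥ x) i ^ 2

lemma sqnorm_mulVec_of_transpose_mul_self_eq_one {Φ : Matrix (Fin n) (Fin k) ℝ}
    (hΦ : Φᵀ * Φ = 1) (x : Fin k → ℝ) : sqnorm (Φ *ᵥ x) = sqnorm x := by
  have sqnorm_eq {l : ℕ} (y : Fin l → ℝ) : sqnorm y = y ⬝ᵥ y := by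
    simp only [sqnorm, dotProduct, sq]
  rw [sqnorm_eq, sqnorm_eq, dotProduct_mulVec, vecMul_mulVec, ← dotProduct_mulVec, hΦ, one_mulVec]

theorem exists_child_short_vector_four_three_general (hkn : k ≤ n) (Φ : Matrix (Fin n) (Fin k) ℝ)
    (x : Fin k → ℝ) :
    ∃ S : {s : Finset (Fin n) // s.card = k},
      sqnorm (rowsSub Φ S *ᵥ x) ≤ k / n * sqnorm (Φ *ᵥ x) := by
  obtain ⟨S, hS, hle⟩ := exists_mem_powersetCard_card_nsmul_sum_le
    (hkn.trans_eq (Finset.card_fin n).symm) fun i => (Φ *ᵥ x) i ^ 2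
  refine ⟨⟨S, (Finset.mem_powersetCard.mp hS).2⟩, ?_⟩
  rw [sqnorm_rowsSub_mulVec]
  obtain rfl | hn := n.eq_zero_or_pos
  · simp [Finset.eq_empty_of_isEmpty S]
  rw [div_mul_eq_mul_div, le_div_iff₀' (Nat.cast_pos.mpr hn)]
  simpa only [sqnorm, Finset.card_fin, nsmul_eq_mul] using hle

end ChildLattice

/-- For any `4 × 3` matrix `Φ` with orthonormal columns, some child lattice
`Φ_S ℤ³` (with `S` a 3-subset of the rows) has a nonzero vector of squared
length at most `3/4`. -/
theorem exists_child_short_vector_four_three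
    (Φ : Matrix (Fin 4) (Fin 3) ℝ) (hΦ : Φᵀ * Φ = 1) :
    ∃ S : {s : Finset (Fin 4) // s.card = 3}, ∃ u : Fin 3 → ℤ, u ≠ 0 ∧
      sqnorm ((rowsSub Φ S).mulVec fun j => (u j : ℝ)) ≤ 3 / 4 := by
  obtain ⟨S, hS⟩ := exists_child_short_vector_four_three_general (by norm_num) Φ
    fun j => ((Pi.single 0 1 : Fin 3 → ℤ) j : ℝ)
  rw [sqnorm_mulVec_of_transpose_mul_self_eq_one hΦ] at hS
  exact ⟨S, Pi.single 0 1, by simp, hS.trans_eq (by simp [sqnorm, Pi.single_apply])⟩
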